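/- arXiv:2301.06086 — 6 statements merged into one kernel-verified Lean document; each statement's English description precedes it below -/
import Mathlib

section
/- Let n and m be positive integers and u : ℕ × ℕ → ℝ be a function such that u(k,t) is nondecreasing in k and nonincreasing in t (on the domain where k + t ≤ m). For a vector k = (k_1,…,k_n) of nonnegative integers with k_1 + … + k_n = m, define its egalitarian value E(k) = min over i ∈ {1,…,n} of u(k_i, k_1 + … + k_{i-1}). Then there exists a vector k maximizing E over all such vectors which is non-decreasing, i.e., k_1 ≤ k_2 ≤ … ≤ k_n. -/
open Finset

/-- A permutation of `ℕ` preserving `{0, …, n - 1}` that sorts the first `n` values of `k`. -/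
theorem exists_perm_monotone_comp (n : ℕ) (k : ℕ → ℕ) :
    ∃ τ : Equiv.Perm ℕ, (∀ i < n, τ i < n) ∧ ∀ i j, i ≤ j → j < n → k (τ i) ≤ k (τ j) := by
  let σ : Equiv.Perm (Fin n) := Tuple.sort fun i : Fin n => k i
  have hτ (i : ℕ) (hi : i < n) :
      σ.extendDomain (Fin.equivSubtype : Fin n ≃ {i // i < n}) i = σ ⟨i, hi⟩ :=
    Equiv.Perm.extendDomain_apply_image σ Fin.equivSubtype ⟨i, hi⟩
  refine ⟨σ.extendDomain Fin.equivSubtype, fun i hi => ?_, fun i j hij hj => ?_⟩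
  · rw [hτ i hi]
    exact (σ ⟨i, hi⟩).isLt
  · rw [hτ i (hij.trans_lt hj), hτ j hj]
    exact Tuple.monotone_sort (fun i : Fin n => k i) (Fin.mk_le_mk.mpr hij)

theorem sum_range_comp_perm {n : ℕ} (k : ℕ → ℕ) (τ : Equiv.Perm ℕ) (hτ : ∀ i < n, τ i < n) :
    ∑ i ∈ range n, k (τ i) = ∑ i ∈ range n, k i := by
  have himage : (range n).image τ = range n := by
    refine eq_of_subset_of_card_le (fun x hx => ?_) (card_image_of_injective _ τ.injective).ge
    obtain ⟨i, hi, rfl⟩ := mem_image.mp hx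
    exact mem_range.mpr (hτ i (mem_range.mp hi))
  conv_rhs => rw [← himage, sum_image τ.injective.injOn]

/-- Each position of the sorted vector is dominated by some position of the original one which
holds a smaller entry and comes after a larger partial sum. -/
theorem exists_le_and_sum_range_le {n : ℕ} (k : ℕ → ℕ) (τ : Equiv.Perm ℕ)
    (hτ : ∀ i < n, τ i < n) (hmono : ∀ i j, i ≤ j → j < n → k (τ i) ≤ k (τ j))
    {i : ℕ} (hi : i < n) :
    ∃ j < n, k j ≤ k (τ i) ∧ ∑ l ∈ range i, k (τ l) ≤ ∑ l ∈ range j, k l := by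
  set A := (range (i + 1)).image τ with hA
  have hne : A.Nonempty := nonempty_range_add_one.image τ
  obtain ⟨l, hl, hlj⟩ := mem_image.mp (A.max'_mem hne)
  have hli : l ≤ i := mem_range_succ_iff.mp hl
  have hle : k (A.max' hne) ≤ k (τ i) := hlj ▸ hmono l i hli hi
  refine ⟨A.max' hne, hlj ▸ hτ l (hli.trans_lt hi), hle, ?_⟩
  have hsub : A.erase (A.max' hne) ⊆ range (A.max' hne) := fun x hx =>
    mem_range.mpr (A.lt_max'_of_mem_erase_max' hne hx)
  have hsum : ∑ x ∈ A, k x = ∑ l ∈ range i, k (τ l) + k (τ i) := by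
    rw [hA, sum_image τ.injective.injOn, sum_range_succ]
  have herase := sum_erase_add A k (A.max'_mem hne)
  have := sum_le_sum_of_subset (f := k) hsub
  omega

/-- Let `u k t` be nondecreasing in `k` and nonincreasing in `t` (on the domain `k + t ≤ m`).
For a vector `k = (k_1, …, k_n)` of nonnegative integers summing to `m`, its egalitarian value
is `E k = min_{i ∈ {1,…,n}} u (k_i) (k_1 + ⋯ + k_{i-1})`.  Then some vector maximizing `E`
over all such vectors is non-decreasing. -/
theorem exists_nondecreasing_egalitarian_optimum
    (n m : ℕ) (hn : 0 < n) (hm : 0 < m) (u : ℕ → ℕ → ℝ)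
    (humono : ∀ k k' t : ℕ, k ≤ k' → k' + t ≤ m → u k t ≤ u k' t)
    (htmono : ∀ k t t' : ℕ, t ≤ t' → k + t' ≤ m → u k t' ≤ u k t) :
    ∃ k : ℕ → ℕ, (∑ i ∈ Finset.range n, k i = m) ∧
      (∀ i j : ℕ, i ≤ j → j < n → k i ≤ k j) ∧
      (∀ k' : ℕ → ℕ, (∑ i ∈ Finset.range n, k' i = m) →
        (Finset.range n).inf' (Finset.nonempty_range_iff.mpr hn.ne')
            (fun i => u (k' i) (∑ j ∈ Finset.range i, k' j)) ≤
          (Finset.range n).inf' (Finset.nonempty_range_iff.mpr hn.ne')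
            (fun i => u (k i) (∑ j ∈ Finset.range i, k j))) := by
  have hne : (range n).Nonempty := nonempty_range_iff.mpr hn.ne'
  let E : (ℕ → ℕ) → ℝ := fun k =>
    (range n).inf' hne fun i => u (k i) (∑ j ∈ range i, k j)
  have hprefix (k : ℕ → ℕ) (hk : ∑ i ∈ range n, k i = m) (i : ℕ) (hi : i < n) :
      k i + ∑ j ∈ range i, k j ≤ m := by
    rw [add_comm, ← sum_range_succ, ← hk]
    exact sum_le_sum_of_subset (range_subset_range.mpr hi)
  obtain ⟨k, hk, hmax⟩ := exists_max_image (piAntidiag (range n) m) E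
    ⟨fun i => if i = 0 then m else 0, by simp [mem_piAntidiag, hn]⟩
  have hksum : ∑ i ∈ range n, k i = m := (mem_piAntidiag.mp hk).1
  obtain ⟨τ, hτ, hmono⟩ := exists_perm_monotone_comp n k
  have hsum := (sum_range_comp_perm k τ hτ).trans hksum
  refine ⟨fun i => k (τ i), hsum, hmono, fun k' hk' => ?_⟩
  let r : ℕ → ℕ := fun i => if i < n then k' i else 0
  have hr (i : ℕ) (hi : i < n) : r i = k' i := if_pos hi
  have hrE : E k' = E r := by
    refine inf'_congr hne rfl fun i hi => ?_
    have hi' := mem_range.mp hi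
    rw [hr i hi', sum_congr rfl fun j hj => hr j ((mem_range.mp hj).trans hi')]
  have hrmem : r ∈ piAntidiag (range n) m := by
    refine mem_piAntidiag.mpr ⟨?_, fun i hi => ?_⟩
    · exact (sum_congr rfl fun i hi => hr i (mem_range.mp hi)).trans hk'
    · by_contra hin
      exact hi (if_neg (mem_range.not.mp hin))
  refine (hrE.trans_le (hmax r hrmem)).trans (le_inf' hne _ fun i hi => ?_)
  have hi' := mem_range.mp hi
  obtain ⟨j, hj, hle, hS⟩ := exists_le_and_sum_range_le k τ hτ hmono hi'
  calc E k ≤ u (k j) (∑ l ∈ range j, k l) := inf'_le _ (mem_range.mpr hj)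
    _ ≤ u (k j) (∑ l ∈ range i, k (τ l)) := htmono _ _ _ hS (hprefix k hksum j hj)
    _ ≤ u (k (τ i)) (∑ l ∈ range i, k (τ l)) :=
      humono _ _ _ hle (hprefix (fun i => k (τ i)) hsum i hi')
end

section
/- Let n and m be positive integers and u : ℕ × ℕ → ℝ any function defined for k + t ≤ m. Define F(n, l) = u(m - l, l) for all l ∈ {0,…,m}, and for i from n-1 down to 1 define F(i, l) = max over k ∈ {0,…,m-l} of ( u(k, l) + F(i+1, l + k) ). Then F(1, 0) equals the maximum, over all vectors (k_1,…,k_n) of nonnegative integers with k_1 + … + k_n = m, of the sum over i ∈ {1,…,n} of u(k_i, k_1 + … + k_{i-1}). -/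
/-- Prefix sums over `Fin (d + 1)` split off their first term. -/
theorem Fin.sum_Iio_succ_eq_add {d : ℕ} (k : Fin (d + 1) → ℕ) (i : Fin d) :
    ∑ j ∈ Finset.Iio i.succ, k j = k 0 + ∑ j ∈ Finset.Iio i, k j.succ := by
  have h : Finset.Iio i.succ = Finset.cons 0 ((Finset.Iio i).map (Fin.succEmb d))
      (by simp) := by
    ext j
    refine Fin.cases ?_ (fun j => ?_) j <;> simp
  rw [h, Finset.sum_cons, Finset.sum_map]
  rfl

/-- The welfare of a picking sequence that starts after `l` items have been picked is the first
agent's utility plus the welfare of the remaining sequence. -/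
theorem welfare_succ {d : ℕ} (u : ℕ → ℕ → ℝ) (l : ℕ) (k : Fin (d + 1) → ℕ) :
    ∑ i, u (k i) (l + ∑ j ∈ Finset.Iio i, k j) =
      u (k 0) l + ∑ i : Fin d, u (k i.succ) (l + k 0 + ∑ j ∈ Finset.Iio i, k j.succ) := by
  have h : Finset.Iio (0 : Fin (d + 1)) = ∅ := by
    ext j
    simp
  simp [Fin.sum_univ_succ, Fin.sum_Iio_succ_eq_add, add_assoc, h]

/-- The table entry `F i l` is the optimal welfare of the agents `i, …, n` once `l` items have
been picked. -/
theorem isGreatest_welfare_from {n m : ℕ} {u F : ℕ → ℕ → ℝ}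
    (hbase : ∀ l ≤ m, F n l = u (m - l) l)
    (hstep : ∀ i l : ℕ, 1 ≤ i → i < n → l ≤ m →
      IsGreatest {x : ℝ | ∃ k ≤ m - l, x = u k l + F (i + 1) (l + k)} (F i l))
    (d i l : ℕ) (hi : 1 ≤ i) (hd : i + d = n) (hl : l ≤ m) :
    IsGreatest {x : ℝ | ∃ k : Fin (d + 1) → ℕ, l + ∑ j, k j = m ∧
      x = ∑ i, u (k i) (l + ∑ j ∈ Finset.Iio i, k j)} (F i l) := by
  induction d generalizing i l with
  | zero =>
    obtain rfl : i = n := hd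
    rw [hbase l hl]
    refine ⟨⟨fun _ => m - l, ?_, ?_⟩, ?_⟩
    · simp [hl]
    · simp
    · rintro x ⟨k, hk, rfl⟩
      have hk0 : k 0 = m - l := by
        simp at hk
        omega
      rw [welfare_succ, hk0]
      simp
  | succ d ih =>
    obtain ⟨⟨k₀, hk₀, hF⟩, hub⟩ := hstep i l hi (by omega) hl
    constructor
    · obtain ⟨⟨k, hk, hx⟩, -⟩ := ih (i + 1) (l + k₀) (by omega) (by omega) (by omega)
      refine ⟨Fin.cons k₀ k, ?_, ?_⟩
      · simpa [Fin.sum_cons, add_assoc] using hk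
      · rw [welfare_succ, hF, hx]
        rfl
    · rintro x ⟨k, hk, rfl⟩
      rw [Fin.sum_univ_succ] at hk
      rw [welfare_succ]
      have hrest := (ih (i + 1) (l + k 0) (by omega) (by omega) (by omega)).2
        ⟨fun j => k j.succ, by rw [add_assoc, hk], rfl⟩
      have hfirst := hub ⟨k 0, by omega, rfl⟩
      linarith

/-- Dynamic programming for utilitarian social welfare.  Let `u k t` be any function (defined
for `k + t ≤ m`), and let `F` satisfy the base case `F n l = u (m - l) l` and, for
`1 ≤ i < n`, the recurrence making `F i l` the maximum over `k ∈ {0,…,m-l}` of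
`u k l + F (i+1) (l+k)`.  Then `F 1 0` is the maximum, over all vectors `(k_1,…,k_n)` of
nonnegative integers summing to `m`, of `∑ i, u (k_i) (k_1 + ⋯ + k_{i-1})`. -/
theorem dp_utilitarian
    (n m : ℕ) (hn : 0 < n) (hm : 0 < m) (u : ℕ → ℕ → ℝ) (F : ℕ → ℕ → ℝ)
    (hbase : ∀ l ≤ m, F n l = u (m - l) l)
    (hstep : ∀ i l : ℕ, 1 ≤ i → i < n → l ≤ m →
      IsGreatest {x : ℝ | ∃ k ≤ m - l, x = u k l + F (i + 1) (l + k)} (F i l)) :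
    IsGreatest {x : ℝ | ∃ k : Fin n → ℕ, (∑ i, k i = m) ∧
      x = ∑ i, u (k i) (∑ j ∈ Finset.Iio i, k j)} (F 1 0) := by
  obtain ⟨d, rfl⟩ := Nat.exists_eq_add_one.mpr hn
  simpa using isGreatest_welfare_from hbase hstep d 1 0 le_rfl (by omega) (Nat.zero_le m)
end

section
/- Let s = (s_1,…,s_m) be a scoring vector. For integers j, k, t with 1 ≤ j ≤ m, k ≥ 0, t ≥ 0 and k + t ≤ m - j + 1, let g(j,k,t) denote the average, over all t-element subsets S of {j,…,m}, of the sum of s_r over the k smallest elements r of {j,…,m} \ S. Then: (i) g(j,0,t) = 0; (ii) g(j,k,0) = s_j + s_{j+1} + … + s_{j+k-1}; and (iii) for j ≤ m-1, k ≥ 1, t ≥ 1 with k + t ≤ m - j + 1, g(j,k,t) = (1 - t/(m-j+1)) · ( s_j + g(j+1, k-1, t) ) + ( t/(m-j+1) ) · g(j+1, k, t-1). -/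
/-- The `k` smallest elements of a finite set `A` of naturals: the elements of `A` having
fewer than `k` strictly smaller elements inside `A`. -/
def smallestK (A : Finset ℕ) (k : ℕ) : Finset ℕ :=
  A.filter fun x => (A.filter fun y => y < x).card < k

/-- `g m s j k t` is the average, over all `t`-element subsets `S` of `{j,…,m}`, of the sum
of `s r` over the `k` smallest elements `r` of `{j,…,m} \ S`. -/
noncomputable def g (m : ℕ) (s : ℕ → ℝ) (j k t : ℕ) : ℝ :=
  (∑ S ∈ (Finset.Icc j m).powersetCard t,
      ∑ r ∈ smallestK (Finset.Icc j m \ S) k, s r) /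
    (((Finset.Icc j m).powersetCard t).card : ℝ)

theorem smallestK_zero (A : Finset ℕ) : smallestK A 0 = ∅ := by
  simp [smallestK]

theorem smallestK_insert_succ {A : Finset ℕ} {a : ℕ} (h : ∀ x ∈ A, a < x) (k : ℕ) :
    smallestK (insert a A) (k + 1) = insert a (smallestK A k) := by
  have ha : a ∉ A := fun hm => lt_irrefl a (h a hm)
  have hbelow : (insert a A).filter (fun y => y < a) = ∅ := by
    ext y
    simp only [Finset.mem_filter, Finset.mem_insert, Finset.notMem_empty, iff_false]
    rintro ⟨rfl | hy, hlt⟩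
    · exact lt_irrefl _ hlt
    · exact lt_asymm hlt (h y hy)
  have hcard : ∀ x ∈ A, ((insert a A).filter fun y => y < x).card
      = (A.filter fun y => y < x).card + 1 := fun x hx => by
    rw [Finset.filter_insert, if_pos (h x hx), Finset.card_insert_of_notMem (by simp [ha])]
  rw [smallestK, Finset.filter_insert, hbelow, if_pos (by simp), smallestK]
  congr 1
  refine Finset.filter_congr fun x hx => ?_
  rw [hcard x hx, Nat.add_lt_add_iff_right]

theorem smallestK_Icc {j m k : ℕ} (h : j + k ≤ m + 1) :
    smallestK (Finset.Icc j m) k = Finset.Ico j (j + k) := by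
  ext x
  have hfilter : x ≤ m → (Finset.Icc j m).filter (fun y => y < x) = Finset.Ico j x := by
    intro hx
    ext y
    simp only [Finset.mem_filter, Finset.mem_Icc, Finset.mem_Ico]
    omega
  simp only [smallestK, Finset.mem_filter, Finset.mem_Icc, Finset.mem_Ico]
  constructor
  · rintro ⟨⟨hj, hx⟩, hc⟩
    rw [hfilter hx, Nat.card_Ico] at hc
    omega
  · rintro ⟨hj, hx⟩
    rw [hfilter (by omega), Nat.card_Ico]
    omega

theorem sum_powersetCard_succ_insert {α M : Type*} [DecidableEq α] [AddCommMonoid M]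
    {a : α} {A : Finset α} (ha : a ∉ A) (t : ℕ) (f : Finset α → M) :
    ∑ S ∈ (insert a A).powersetCard (t + 1), f S
      = ∑ S ∈ A.powersetCard (t + 1), f S + ∑ S ∈ A.powersetCard t, f (insert a S) := by
  have hmem : ∀ {u : ℕ} {S : Finset α}, S ∈ A.powersetCard u → a ∉ S := fun hS haS =>
    ha ((Finset.mem_powersetCard.1 hS).1 haS)
  rw [Finset.powersetCard_succ_insert ha, Finset.sum_union, Finset.sum_image]
  · intro S hS T hT hST
    rw [← Finset.erase_insert (hmem hS), hST, Finset.erase_insert (hmem hT)]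
  · rw [Finset.disjoint_left]
    intro S hS hS'
    obtain ⟨T, -, rfl⟩ := Finset.mem_image.1 hS'
    exact hmem hS (Finset.mem_insert_self a T)

/-- Splitting the sum over the `(t + 1)`-subsets of `{j,…,m}` according to whether the
subset contains `j`. -/
theorem sum_smallestK_Icc_succ {m j : ℕ} (hj : j ≤ m) (s : ℕ → ℝ) (k t : ℕ) :
    ∑ S ∈ (Finset.Icc j m).powersetCard (t + 1),
        ∑ r ∈ smallestK (Finset.Icc j m \ S) (k + 1), s r
      = ∑ S ∈ (Finset.Icc (j + 1) m).powersetCard (t + 1),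
          (s j + ∑ r ∈ smallestK (Finset.Icc (j + 1) m \ S) k, s r)
        + ∑ S ∈ (Finset.Icc (j + 1) m).powersetCard t,
          ∑ r ∈ smallestK (Finset.Icc (j + 1) m \ S) (k + 1), s r := by
  have hj' : j ∉ Finset.Icc (j + 1) m := by simp
  rw [← Finset.insert_Icc_add_one_left_eq_Icc hj, sum_powersetCard_succ_insert hj']
  congr 1
  · refine Finset.sum_congr rfl fun S hS => ?_
    have hjS : j ∉ S := fun h => hj' ((Finset.mem_powersetCard.1 hS).1 h)
    have hlt : ∀ x ∈ Finset.Icc (j + 1) m \ S, j < x := fun x hx =>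
      (Finset.mem_Icc.1 (Finset.mem_sdiff.1 hx).1).1
    rw [Finset.insert_sdiff_of_notMem _ hjS, smallestK_insert_succ hlt,
      Finset.sum_insert (by simp [smallestK])]
  · refine Finset.sum_congr rfl fun S _ => ?_
    rw [Finset.insert_sdiff_insert, Finset.sdiff_insert_of_notMem hj']

theorem g_zero_picks (m : ℕ) (s : ℕ → ℝ) (j t : ℕ) : g m s j 0 t = 0 := by
  simp [g, smallestK_zero]

theorem g_zero_taken {m j k : ℕ} (h : j + k ≤ m + 1) (s : ℕ → ℝ) :
    g m s j k 0 = ∑ r ∈ Finset.Ico j (j + k), s r := by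
  simp [g, smallestK_Icc h]

theorem g_succ_succ {m j t : ℕ} (h : t + 1 ≤ m - j) (s : ℕ → ℝ) (k : ℕ) :
    g m s j (k + 1) (t + 1) =
      (1 - ((t + 1 : ℕ) : ℝ) / ((m - j + 1 : ℕ) : ℝ)) * (s j + g m s (j + 1) k (t + 1)) +
        (((t + 1 : ℕ) : ℝ) / ((m - j + 1 : ℕ) : ℝ)) * g m s (j + 1) (k + 1) t := by
  have hcard : (Finset.Icc j m).card = m - j + 1 := by rw [Nat.card_Icc]; omega
  have hcard' : (Finset.Icc (j + 1) m).card = m - j := by rw [Nat.card_Icc]; omega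
  simp only [g]
  rw [sum_smallestK_Icc_succ (by omega), Finset.sum_add_distrib, Finset.sum_const,
    nsmul_eq_mul]
  simp only [Finset.card_powersetCard, hcard, hcard']
  generalize m - j = n at h
  have hpos : (0 : ℝ) < n.choose (t + 1) := by exact_mod_cast Nat.choose_pos h
  have hpos' : (0 : ℝ) < n.choose t := by exact_mod_cast Nat.choose_pos (by omega)
  have hratio : ((t + 1 : ℕ) : ℝ) / ((n + 1 : ℕ) : ℝ)
      = n.choose t / (n.choose t + n.choose (t + 1)) := by
    rw [div_eq_div_iff (by positivity) (by positivity)]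
    have hmul := Nat.add_one_mul_choose_eq n t
    rw [Nat.choose_succ_succ'] at hmul
    have hmul' : ((n + 1 : ℕ) : ℝ) * n.choose t
        = (n.choose t + n.choose (t + 1)) * ((t + 1 : ℕ) : ℝ) := by exact_mod_cast hmul
    linarith
  rw [hratio, Nat.choose_succ_succ']
  push_cast
  field_simp
  ring

/-- Recursive formula for the expected greedy-pick utility in the full independence model:
with `g m s j k t` the average over all `t`-element subsets `S` of `{j,…,m}` of the sum of
`s r` over the `k` smallest elements of `{j,…,m} \ S`, one has (i) `g(j,0,t) = 0`;
(ii) `g(j,k,0) = s_j + ⋯ + s_{j+k-1}`; and (iii) for `j ≤ m-1`, `k ≥ 1`, `t ≥ 1` with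
`k + t ≤ m - j + 1`,
`g(j,k,t) = (1 - t/(m-j+1)) (s_j + g(j+1,k-1,t)) + (t/(m-j+1)) g(j+1,k,t-1)`. -/
theorem g_recursion
    (m : ℕ) (hm : 0 < m) (s : ℕ → ℝ)
    (hmono : ∀ i j : ℕ, 1 ≤ i → i ≤ j → j ≤ m → s j ≤ s i)
    (hnonneg : ∀ j : ℕ, 1 ≤ j → j ≤ m → 0 ≤ s j) :
    (∀ j t : ℕ, 1 ≤ j → j ≤ m → t ≤ m - j + 1 → g m s j 0 t = 0) ∧
    (∀ j k : ℕ, 1 ≤ j → j ≤ m → k ≤ m - j + 1 →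
      g m s j k 0 = ∑ r ∈ Finset.Ico j (j + k), s r) ∧
    (∀ j k t : ℕ, 1 ≤ j → j ≤ m - 1 → 1 ≤ k → 1 ≤ t → k + t ≤ m - j + 1 →
      g m s j k t =
        (1 - (t : ℝ) / ((m - j + 1 : ℕ) : ℝ)) * (s j + g m s (j + 1) (k - 1) t) +
          ((t : ℝ) / ((m - j + 1 : ℕ) : ℝ)) * g m s (j + 1) k (t - 1)) := by
  refine ⟨fun j t _ _ _ => g_zero_picks m s j t,
    fun j k _ _ _ => g_zero_taken (by omega) s, fun j k t _ _ hk ht _ => ?_⟩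
  obtain ⟨k, rfl⟩ := Nat.exists_eq_add_of_le' hk
  obtain ⟨t, rfl⟩ := Nat.exists_eq_add_of_le' ht
  exact g_succ_succ (by omega) s k
end

section
/- Let s = (s_1,…,s_m) be a scoring vector, and for k + t ≤ m let g(k,t) denote the average, over all t-element subsets S of {1,…,m}, of the sum of s_r over the k smallest elements r of {1,…,m} \ S. Then g(k,t) is nondecreasing in k and nonincreasing in t: g(k,t) ≤ g(k+1,t) whenever k+1+t ≤ m, and g(k,t+1) ≤ g(k,t) whenever k+t+1 ≤ m. -/
open Finset

theorem smallestK_subset (A : Finset ℕ) (k : ℕ) : smallestK A k ⊆ A :=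
  filter_subset _ _

theorem smallestK_subset_succ (A : Finset ℕ) (k : ℕ) : smallestK A k ⊆ smallestK A (k + 1) :=
  monotone_filter_right A fun _ _ h => Nat.lt_succ_of_lt h

/-- The number of elements of `A` below a given element of `A` is strictly monotone on `A`. -/
theorem card_filter_lt_strictMono {A : Finset ℕ} {x y : ℕ} (hx : x ∈ A) (hxy : x < y) :
    #{z ∈ A | z < x} < #{z ∈ A | z < y} := by
  refine card_lt_card ((ssubset_iff_of_subset ?_).2 ⟨x, ?_, ?_⟩)
  · exact monotone_filter_right A fun _ _ h => h.trans hxy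
  · simp [hx, hxy]
  · simp

/-- Removing an element does not increase the total score of the `k` smallest elements. -/
theorem sum_smallestK_erase_le {A : Finset ℕ} {s : ℕ → ℝ} (hs : AntitoneOn s A)
    (hnonneg : ∀ r ∈ A, 0 ≤ s r) {x : ℕ} (hx : x ∈ A) (k : ℕ) :
    ∑ r ∈ smallestK (A.erase x) k, s r ≤ ∑ r ∈ smallestK A k, s r := by
  by_cases hsub : smallestK (A.erase x) k ⊆ smallestK A k
  · exact sum_le_sum_of_subset_of_nonneg hsub fun r hr _ => hnonneg r (smallestK_subset A k hr)
  obtain ⟨y, hyB, hyA⟩ := not_subset.1 hsub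
  have rank_erase (z : ℕ) :
      #{w ∈ A.erase x | w < z} = if x < z then #{w ∈ A | w < z} - 1 else #{w ∈ A | w < z} := by
    rw [filter_erase, card_erase_eq_ite]
    simp [hx]
  have gained {z : ℕ} (hzB : z ∈ smallestK (A.erase x) k) (hzA : z ∉ smallestK A k) :
      z ∈ A.erase x ∧ x < z ∧ #{w ∈ A | w < z} = k := by
    simp only [smallestK, mem_filter, rank_erase] at hzB hzA
    have hz := mem_of_mem_erase hzB.1
    have h1 : k ≤ #{w ∈ A | w < z} := by simpa [hz] using hzA
    have h2 := hzB.2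
    refine ⟨hzB.1, ?_⟩
    split_ifs at h2 with h
    · exact ⟨h, by omega⟩
    · omega
  obtain ⟨hy, hxy, hyk⟩ := gained hyB hyA
  have hyA' := mem_of_mem_erase hy
  have hxP : x ∈ smallestK A k :=
    mem_filter.2 ⟨hx, hyk ▸ card_filter_lt_strictMono hx hxy⟩
  have hsub' : smallestK (A.erase x) k ⊆ insert y ((smallestK A k).erase x) := by
    intro z hz
    by_cases hzA : z ∈ smallestK A k
    · exact mem_insert_of_mem
        (mem_erase.2 ⟨ne_of_mem_erase (smallestK_subset _ _ hz), hzA⟩)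
    · obtain ⟨hz', -, hzk⟩ := gained hz hzA
      rcases lt_trichotomy z y with h | rfl | h
      · have := card_filter_lt_strictMono (mem_of_mem_erase hz') h
        omega
      · exact mem_insert_self _ _
      · have := card_filter_lt_strictMono hyA' h
        omega
  calc ∑ r ∈ smallestK (A.erase x) k, s r
      ≤ ∑ r ∈ insert y ((smallestK A k).erase x), s r := by
        refine sum_le_sum_of_subset_of_nonneg hsub' fun r hr _ => hnonneg r ?_
        rcases mem_insert.1 hr with rfl | hr
        · exact hyA'
        · exact smallestK_subset A k (mem_of_mem_erase hr)
    _ = s y + ∑ r ∈ (smallestK A k).erase x, s r :=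
        sum_insert fun h => hyA (mem_of_mem_erase h)
    _ ≤ s x + ∑ r ∈ (smallestK A k).erase x, s r := by
        gcongr
        exact hs hx hyA' hxy.le
    _ = ∑ r ∈ smallestK A k, s r := add_sum_erase _ _ hxP

/-- Double counting of the pairs `(S, T)` with `T = insert x S`, `x ∉ S` and `#S = t`. -/
theorem sum_powersetCard_succ_sum_erase {α : Type*} [DecidableEq α] (U : Finset α) (t : ℕ)
    (f : Finset α → ℝ) :
    ∑ T ∈ U.powersetCard (t + 1), ∑ x ∈ T, f (T.erase x) =
      ∑ S ∈ U.powersetCard t, ∑ _x ∈ U \ S, f S := by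
  rw [sum_sigma', sum_sigma']
  refine sum_bij' (fun p _ => ⟨p.1.erase p.2, p.2⟩) (fun p _ => ⟨insert p.2 p.1, p.2⟩)
    ?_ ?_ ?_ ?_ ?_
  · rintro ⟨T, x⟩ h
    simp only [mem_sigma, mem_powersetCard, mem_sdiff] at h ⊢
    obtain ⟨⟨hT, hc⟩, hx⟩ := h
    exact ⟨⟨(erase_subset _ _).trans hT, by rw [card_erase_of_mem hx, hc]; rfl⟩, hT hx,
      notMem_erase _ _⟩
  · rintro ⟨S, x⟩ h
    simp only [mem_sigma, mem_powersetCard, mem_sdiff] at h ⊢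
    obtain ⟨⟨hS, hc⟩, hx, hxS⟩ := h
    exact ⟨⟨insert_subset hx hS, by rw [card_insert_of_notMem hxS, hc]⟩, mem_insert_self _ _⟩
  · rintro ⟨T, x⟩ h
    simp only [mem_sigma] at h
    simp [insert_erase h.2]
  · rintro ⟨S, x⟩ h
    simp only [mem_sigma, mem_sdiff] at h
    simp [erase_insert h.2.2]
  · rintro ⟨T, x⟩ -
    rfl

/-- If deleting an element never decreases `f`, then the average of `f` over the
`(t + 1)`-subsets of `U` is at most its average over the `t`-subsets. -/
theorem average_powersetCard_succ_le {α : Type*} [DecidableEq α] {U : Finset α} {t : ℕ}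
    (ht : t < #U) {f : Finset α → ℝ} (hf : ∀ T ⊆ U, ∀ x ∈ T, f T ≤ f (T.erase x)) :
    (∑ T ∈ U.powersetCard (t + 1), f T) / #(U.powersetCard (t + 1)) ≤
      (∑ S ∈ U.powersetCard t, f S) / #(U.powersetCard t) := by
  have hle : (t + 1 : ℝ) * ∑ T ∈ U.powersetCard (t + 1), f T ≤
      ((#U - t : ℕ) : ℝ) * ∑ S ∈ U.powersetCard t, f S := by
    calc (t + 1 : ℝ) * ∑ T ∈ U.powersetCard (t + 1), f T
        = ∑ T ∈ U.powersetCard (t + 1), ∑ _x ∈ T, f T := by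
          rw [mul_sum]
          refine sum_congr rfl fun T hT => ?_
          simp [(mem_powersetCard.1 hT).2]
      _ ≤ ∑ T ∈ U.powersetCard (t + 1), ∑ x ∈ T, f (T.erase x) :=
          sum_le_sum fun T hT => sum_le_sum fun x hx => hf T (mem_powersetCard.1 hT).1 x hx
      _ = ∑ S ∈ U.powersetCard t, ∑ _x ∈ U \ S, f S := sum_powersetCard_succ_sum_erase U t f
      _ = ((#U - t : ℕ) : ℝ) * ∑ S ∈ U.powersetCard t, f S := by
          rw [mul_sum]
          refine sum_congr rfl fun S hS => ?_
          obtain ⟨hS, hc⟩ := mem_powersetCard.1 hS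
          rw [sum_const, card_sdiff_of_subset hS, hc, nsmul_eq_mul]
  have hchoose : ((#U).choose (t + 1) : ℝ) * (t + 1) = (#U).choose t * (#U - t : ℕ) := by
    exact_mod_cast Nat.choose_succ_right_eq (#U) t
  have h1 : (0 : ℝ) < (#U).choose (t + 1) := by exact_mod_cast Nat.choose_pos ht
  have h0 : (0 : ℝ) < (#U).choose t := by exact_mod_cast Nat.choose_pos ht.le
  have ht1 : (0 : ℝ) < t + 1 := by positivity
  rw [card_powersetCard, card_powersetCard, div_le_div_iff₀ h1 h0]
  refine le_of_mul_le_mul_left ?_ ht1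
  calc (t + 1 : ℝ) * ((∑ T ∈ U.powersetCard (t + 1), f T) * (#U).choose t)
      = (#U).choose t * ((t + 1 : ℝ) * ∑ T ∈ U.powersetCard (t + 1), f T) := by ring
    _ ≤ (#U).choose t * (((#U - t : ℕ) : ℝ) * ∑ S ∈ U.powersetCard t, f S) := by gcongr
    _ = (t + 1 : ℝ) * ((∑ S ∈ U.powersetCard t, f S) * (#U).choose (t + 1)) := by
        linear_combination (-∑ S ∈ U.powersetCard t, f S) * hchoose

/-- Monotonicity of the expected greedy-pick utility in the full independence model:
with `g m s 1 k t` the average over all `t`-element subsets `S` of `{1,…,m}` of the sum of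
`s r` over the `k` smallest elements of `{1,…,m} \ S`, the quantity `g m s 1 k t` is
nondecreasing in `k` and nonincreasing in `t` on the domain `k + t ≤ m`. -/
theorem g_monotone
    (m : ℕ) (hm : 0 < m) (s : ℕ → ℝ)
    (hmono : ∀ i j : ℕ, 1 ≤ i → i ≤ j → j ≤ m → s j ≤ s i)
    (hnonneg : ∀ j : ℕ, 1 ≤ j → j ≤ m → 0 ≤ s j) :
    (∀ k t : ℕ, k + 1 + t ≤ m → g m s 1 k t ≤ g m s 1 (k + 1) t) ∧
    (∀ k t : ℕ, k + t + 1 ≤ m → g m s 1 k (t + 1) ≤ g m s 1 k t) := by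
  constructor
  · intro k t _
    unfold g
    refine div_le_div_of_nonneg_right (sum_le_sum fun S _ => ?_) (Nat.cast_nonneg _)
    refine sum_le_sum_of_subset_of_nonneg (smallestK_subset_succ _ k) fun r hr _ => ?_
    have hr := mem_Icc.1 (sdiff_subset (smallestK_subset _ _ hr))
    exact hnonneg r hr.1 hr.2
  · intro k t hkt
    refine average_powersetCard_succ_le (by simp; omega) fun T hT x hx => ?_
    have hA : Icc 1 m \ T = (Icc 1 m \ T.erase x).erase x := by
      ext z
      by_cases hz : z = x <;> simp [hz, hx]
    rw [hA]
    refine sum_smallestK_erase_le ?_ ?_ ?_ k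
    · intro i hi j hj hij
      have hi := mem_Icc.1 (sdiff_subset (mem_coe.1 hi))
      have hj := mem_Icc.1 (sdiff_subset (mem_coe.1 hj))
      exact hmono i j hi.1 hij hj.2
    · intro r hr
      have hr := mem_Icc.1 (sdiff_subset hr)
      exact hnonneg r hr.1 hr.2
    · exact mem_sdiff.2 ⟨hT hx, notMem_erase _ _⟩
end

section
/- Let r agents have rankings over the item set {1,…,m} that are independent and uniformly distributed over all m! rankings, and let them pick greedily in turn, agent i picking her k_i most preferred remaining items, with t = k_1 + … + k_r ≤ m. Then the random set consisting of all t picked items is uniformly distributed over the t-element subsets of {1,…,m}. -/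
/-- The `k` most preferred items of `S` under the ranking `σ` (where `σ r` is the item of
0-based rank `r`, so `σ.symm x` is the rank of item `x`): the items of `S` having fewer
than `k` strictly better items inside `S`. -/
def topk {m : ℕ} (σ : Fin m ≃ Fin m) (S : Finset (Fin m)) (k : ℕ) : Finset (Fin m) :=
  S.filter fun x => (S.filter fun y => σ.symm y < σ.symm x).card < k

/-- Items remaining before the `i`-th agent (0-based) picks, under profile `P` (agent `i`
has ranking `P i`) and pick-count vector `k` (agent `i` picks `k i` items). -/
def remaining {m : ℕ} (P : ℕ → Fin m ≃ Fin m) (k : ℕ → ℕ) : ℕ → Finset (Fin m)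
  | 0 => Finset.univ
  | i + 1 => remaining P k i \ topk (P i) (remaining P k i) (k i)

/-- The set of items greedily picked by the `i`-th agent (0-based). -/
def alloc {m : ℕ} (P : ℕ → Fin m ≃ Fin m) (k : ℕ → ℕ) (i : ℕ) : Finset (Fin m) :=
  topk (P i) (remaining P k i) (k i)

/-- The utility of the `i`-th agent (0-based): the sum of the scores `s r` over the
1-based ranks `r` (in her own ranking) of the items she receives. -/
noncomputable def util {m : ℕ} (s : ℕ → ℝ) (P : ℕ → Fin m ≃ Fin m) (k : ℕ → ℕ)
    (i : ℕ) : ℝ :=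
  ∑ x ∈ alloc P k i, s (((P i).symm x : ℕ) + 1)

/-- Extend a profile on `Fin r` to a profile indexed by `ℕ` (agents `≥ r` are irrelevant). -/
def extendProfile {m : ℕ} (r : ℕ) (Q : Fin r → Fin m ≃ Fin m) : ℕ → Fin m ≃ Fin m :=
  fun i => if h : i < r then Q ⟨i, h⟩ else Equiv.refl _

/-- The ranks of the items of `S` inside `S` are exactly `0, …, |S| - 1`. -/
theorem image_rank_eq_range {m : ℕ} (σ : Fin m ≃ Fin m) (S : Finset (Fin m)) :
    S.image (fun x => (S.filter fun y => σ.symm y < σ.symm x).card) = Finset.range S.card := by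
  have hmono : ∀ x ∈ S, ∀ z ∈ S, σ.symm x < σ.symm z →
      (S.filter fun y => σ.symm y < σ.symm x).card <
        (S.filter fun y => σ.symm y < σ.symm z).card := by
    intro x hx z _ hxz
    refine Finset.card_lt_card (Finset.ssubset_iff_of_subset ?_ |>.2 ⟨x, ?_, ?_⟩)
    · intro y hy
      rw [Finset.mem_filter] at hy ⊢
      exact ⟨hy.1, hy.2.trans hxz⟩
    · exact Finset.mem_filter.2 ⟨hx, hxz⟩
    · simp
  refine Finset.eq_of_subset_of_card_le ?_ ?_
  · intro n hn
    obtain ⟨x, hx, rfl⟩ := Finset.mem_image.1 hn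
    refine Finset.mem_range.2 (Finset.card_lt_card ?_)
    exact Finset.filter_ssubset.2 ⟨x, hx, lt_irrefl _⟩
  · rw [Finset.card_range, Finset.card_image_of_injOn]
    intro x hx z hz hxz
    rcases lt_trichotomy (σ.symm x) (σ.symm z) with h | h | h
    · exact absurd hxz (hmono x hx z hz h).ne
    · exact σ.symm.injective h
    · exact absurd hxz (hmono z hz x hx h).ne'

theorem card_sdiff_topk {m : ℕ} (σ : Fin m ≃ Fin m) (S : Finset (Fin m)) (k : ℕ) :
    (S \ topk σ S k).card = S.card - k := by
  have himage := image_rank_eq_range σ S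
  have hinj : Set.InjOn (fun x => (S.filter fun y => σ.symm y < σ.symm x).card) S := by
    rw [← Finset.card_image_iff, himage, Finset.card_range]
  have hcompl : S \ topk σ S k =
      S.filter fun x => k ≤ (S.filter fun y => σ.symm y < σ.symm x).card := by
    ext x
    simp only [topk, Finset.mem_sdiff, Finset.mem_filter, not_and, not_lt]
    tauto
  have hIco : (S \ topk σ S k).image (fun x => (S.filter fun y => σ.symm y < σ.symm x).card) =
      Finset.Ico k S.card := by
    rw [hcompl, ← Finset.filter_image, himage]
    ext n
    simp [and_comm]
  rw [← Nat.card_Ico, ← hIco, Finset.card_image_of_injOn]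
  exact hinj.mono (by simp)

theorem card_remaining {m : ℕ} (P : ℕ → Fin m ≃ Fin m) (k : ℕ → ℕ) (i : ℕ) :
    (remaining P k i).card = m - ∑ j ∈ Finset.range i, k j := by
  induction i with
  | zero => simp [remaining]
  | succ i ih => rw [remaining, card_sdiff_topk, ih, Finset.sum_range_succ, Nat.sub_sub]

theorem topk_trans_map {m : ℕ} (σ π : Fin m ≃ Fin m) (S : Finset (Fin m)) (k : ℕ) :
    topk (σ.trans π) (S.map π.toEmbedding) k = (topk σ S k).map π.toEmbedding := by
  simp only [topk, Finset.filter_map, Finset.card_map]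
  congr 1
  ext x
  simp [Function.comp_def]

/-- Relabelling the items by `π` relabels the remaining items by `π`. -/
theorem remaining_relabel {m r : ℕ} (Q : Fin r → Fin m ≃ Fin m) (π : Fin m ≃ Fin m)
    (k : ℕ → ℕ) {i : ℕ} (hi : i ≤ r) :
    remaining (extendProfile r fun j => (Q j).trans π) k i =
      (remaining (extendProfile r Q) k i).map π.toEmbedding := by
  induction i with
  | zero => simp [remaining]
  | succ i ih =>
    have hprofile : extendProfile r (fun j => (Q j).trans π) i =
        (extendProfile r Q i).trans π := by
      simp [extendProfile, Nat.lt_of_succ_le hi]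
    rw [remaining, remaining, ih (Nat.le_of_succ_le hi), hprofile, topk_trans_map, Finset.map_sdiff]

theorem exists_equiv_map_eq {α : Type*} [Finite α] {S T : Finset α}
    (h : S.card = T.card) : ∃ π : α ≃ α, S.map π.toEmbedding = T := by
  classical
  have e : {x // x ∈ S} ≃ {x // x ∈ T} := Finset.equivOfCardEq h
  refine ⟨e.extendSubtype, Finset.eq_of_subset_of_card_le ?_ (by simp [h])⟩
  intro y hy
  obtain ⟨x, hx, rfl⟩ := Finset.mem_map.1 hy
  exact e.extendSubtype_mem x hx

/-- The number of profiles whose picked set is `T` depends only on the size of `T`. -/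
theorem card_profiles_picked_eq {r m : ℕ} (k : ℕ → ℕ) {S T : Finset (Fin m)}
    (h : S.card = T.card) :
    Nat.card {Q : Fin r → Fin m ≃ Fin m //
        Finset.univ \ remaining (extendProfile r Q) k r = S} =
      Nat.card {Q : Fin r → Fin m ≃ Fin m //
        Finset.univ \ remaining (extendProfile r Q) k r = T} := by
  obtain ⟨π, rfl⟩ := exists_equiv_map_eq h
  let relabel : (Fin m ≃ Fin m) ≃ (Fin m ≃ Fin m) := Equiv.equivCongr (Equiv.refl _) π
  refine Nat.card_congr ((Equiv.arrowCongr (Equiv.refl (Fin r)) relabel).subtypeEquiv fun Q => ?_)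
  have hQ : Equiv.arrowCongr (Equiv.refl (Fin r)) relabel Q = fun j => (Q j).trans π := by
    ext j x
    simp [relabel]
  rw [hQ, remaining_relabel Q π k le_rfl, ← Finset.map_univ_equiv π, ← Finset.map_sdiff,
    Finset.map_inj, Finset.map_univ_equiv]

/-- In the full independence model, if `r` agents with independent uniformly random rankings
pick greedily in turn (agent `i` picking her `k i` most preferred remaining items), with
`t = k_1 + ⋯ + k_r ≤ m`, then the set of all `t` picked items is uniformly distributed over
the `t`-element subsets of the `m` items: for every `t`-subset `T`, the number of profiles
whose picked set is `T`, times the number `C(m,t)` of `t`-subsets, equals the total number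
of profiles. -/
theorem fi_picked_set_uniform
    (r m : ℕ) (k : ℕ → ℕ) (t : ℕ) (ht : ∑ i ∈ Finset.range r, k i = t) (htm : t ≤ m) :
    ∀ T : Finset (Fin m), T.card = t →
      Nat.card {Q : Fin r → Fin m ≃ Fin m //
          Finset.univ \ remaining (extendProfile r Q) k r = T} * m.choose t =
        Fintype.card (Fin r → Fin m ≃ Fin m) := by
  intro T hT
  classical
  have hmaps : ∀ Q ∈ (Finset.univ : Finset (Fin r → Fin m ≃ Fin m)),
      Finset.univ \ remaining (extendProfile r Q) k r ∈
        Finset.powersetCard t (Finset.univ : Finset (Fin m)) := by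
    intro Q _
    rw [Finset.mem_powersetCard]
    refine ⟨Finset.subset_univ _, ?_⟩
    rw [Finset.card_sdiff_of_subset (Finset.subset_univ _), card_remaining, ht, Finset.card_univ,
      Fintype.card_fin]
    omega
  have hfiber : ∀ S ∈ Finset.powersetCard t (Finset.univ : Finset (Fin m)),
      (Finset.univ.filter fun Q : Fin r → Fin m ≃ Fin m =>
        Finset.univ \ remaining (extendProfile r Q) k r = S).card =
      Nat.card {Q : Fin r → Fin m ≃ Fin m //
        Finset.univ \ remaining (extendProfile r Q) k r = T} := by
    intro S hS
    rw [← card_profiles_picked_eq k ((Finset.mem_powersetCard.1 hS).2.trans hT.symm),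
      Nat.card_eq_fintype_card, Fintype.card_subtype]
  rw [← Finset.card_univ, Finset.card_eq_sum_card_fiberwise hmaps, Finset.sum_congr rfl hfiber,
    Finset.sum_const, Finset.card_powersetCard, Finset.card_univ, Fintype.card_fin, smul_eq_mul,
    mul_comm]
end

section
/- Let n ≥ 2 and d ≥ 1 be integers, m = d·n, and s = (s_1,…,s_m) a scoring vector with all entries strictly positive. Then there exists a preference profile P for n agents over m items such that, for the non-interleaving picking sequence k = (d, d, …, d): ( (n-1)·Σ_{j=1}^{d} s_j + Σ_{j=d+1}^{2d} s_j ) / ( Σ_{j=1}^{m} s_j ) ≤ ( max_{π} SW^u_{P_π}(k) ) / ( min_{π} SW^u_{P_π}(k) ) ≤ ( n·Σ_{j=1}^{d} s_j ) / ( Σ_{j=1}^{m} s_j ), where π ranges over all permutations of the n agents and P_π is the profile obtained from P by permuting the agents' rankings according to π. -/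
/-- Permute the agents' rankings: agent at position `i` (0-based, `i < n`) gets the ranking
of agent `π i`. -/
def permProfile {m : ℕ} (n : ℕ) (P : ℕ → Fin m ≃ Fin m) (π : Equiv.Perm (Fin n)) :
    ℕ → Fin m ≃ Fin m :=
  fun i => if h : i < n then P ((π ⟨i, h⟩ : Fin n) : ℕ) else P i

/-- Utilitarian social welfare of the non-interleaving picking sequence `(d,…,d)` for `n`
agents. -/
noncomputable def SWu {m : ℕ} (n d : ℕ) (s : ℕ → ℝ) (P : ℕ → Fin m ≃ Fin m) : ℝ :=
  ∑ i ∈ Finset.range n, util s P (fun _ => d) i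

open Finset

section Picking

variable {m : ℕ}

/-- The number of items of `S` that `σ` ranks strictly above `x`. -/
def betterCount (σ : Fin m ≃ Fin m) (S : Finset (Fin m)) (x : Fin m) : ℕ :=
  #{y ∈ S | σ.symm y < σ.symm x}

lemma betterCount_lt_of_lt (σ : Fin m ≃ Fin m) {S : Finset (Fin m)} {x y : Fin m}
    (hx : x ∈ S) (hxy : σ.symm x < σ.symm y) : betterCount σ S x < betterCount σ S y := by
  apply card_lt_card
  refine (ssubset_iff_of_subset ?_).2 ⟨x, by simp [hx, hxy], by simp⟩
  intro z hz
  simp only [mem_filter] at hz ⊢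
  exact ⟨hz.1, hz.2.trans hxy⟩

lemma betterCount_injOn (σ : Fin m ≃ Fin m) (S : Finset (Fin m)) :
    Set.InjOn (betterCount σ S) S := by
  intro x hx y hy h
  rcases lt_trichotomy (σ.symm x) (σ.symm y) with hlt | heq | hgt
  · exact absurd h (betterCount_lt_of_lt σ hx hlt).ne
  · exact σ.symm.injective heq
  · exact absurd h (betterCount_lt_of_lt σ hy hgt).ne'

lemma image_betterCount (σ : Fin m ≃ Fin m) (S : Finset (Fin m)) :
    S.image (betterCount σ S) = range #S := by
  apply eq_of_subset_of_card_le
  · intro j hj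
    obtain ⟨x, hx, rfl⟩ := mem_image.1 hj
    exact mem_range.2 (card_lt_card (filter_ssubset.2 ⟨x, hx, lt_irrefl _⟩))
  · rw [card_range, card_image_of_injOn (betterCount_injOn σ S)]

lemma topk_subset (σ : Fin m ≃ Fin m) (S : Finset (Fin m)) (k : ℕ) : topk σ S k ⊆ S :=
  filter_subset _ _

lemma mem_topk {σ : Fin m ≃ Fin m} {S : Finset (Fin m)} {k : ℕ} {x : Fin m} :
    x ∈ topk σ S k ↔ x ∈ S ∧ betterCount σ S x < k :=
  mem_filter

lemma image_betterCount_topk (σ : Fin m ≃ Fin m) {S : Finset (Fin m)} {k : ℕ} (hk : k ≤ #S) :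
    (topk σ S k).image (betterCount σ S) = range k := by
  ext j
  simp only [mem_image, mem_range, mem_topk]
  constructor
  · rintro ⟨x, hx, rfl⟩
    exact hx.2
  · intro hj
    have hmem : j ∈ S.image (betterCount σ S) := by
      rw [image_betterCount]
      exact mem_range.2 (hj.trans_le hk)
    obtain ⟨x, hx, rfl⟩ := mem_image.1 hmem
    exact ⟨x, ⟨hx, hj⟩, rfl⟩

lemma sum_topk_betterCount (σ : Fin m ≃ Fin m) {S : Finset (Fin m)} {k : ℕ} (hk : k ≤ #S)
    (f : ℕ → ℝ) : ∑ x ∈ topk σ S k, f (betterCount σ S x) = ∑ j ∈ range k, f j := by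
  rw [← image_betterCount_topk σ hk, sum_image]
  exact (betterCount_injOn σ S).mono (topk_subset σ S k)

lemma card_topk (σ : Fin m ≃ Fin m) {S : Finset (Fin m)} {k : ℕ} (hk : k ≤ #S) :
    #(topk σ S k) = k := by
  rw [← card_image_of_injOn ((betterCount_injOn σ S).mono (topk_subset σ S k)),
    image_betterCount_topk σ hk, card_range]

lemma betterCount_univ (σ : Fin m ≃ Fin m) (x : Fin m) :
    betterCount σ univ x = (σ.symm x : ℕ) := by
  have h : ({y ∈ univ | σ.symm y < σ.symm x} : Finset (Fin m))
      = (Iio (σ.symm x)).map σ.toEmbedding := by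
    ext y
    simp [Finset.mem_map_equiv]
  rw [betterCount, h, card_map, Fin.card_Iio]

lemma betterCount_le_rank (σ : Fin m ≃ Fin m) (S : Finset (Fin m)) (x : Fin m) :
    betterCount σ S x ≤ (σ.symm x : ℕ) := by
  rw [← betterCount_univ]
  exact card_le_card (filter_subset_filter _ (subset_univ S))

lemma rank_le_card_compl_add_betterCount (σ : Fin m ≃ Fin m) (S : Finset (Fin m)) (x : Fin m) :
    (σ.symm x : ℕ) ≤ #Sᶜ + betterCount σ S x := by
  rw [← betterCount_univ]
  refine (card_le_card ?_).trans (card_union_le _ _)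
  intro y hy
  by_cases hyS : y ∈ S <;> simp_all

/-- A set of `k` items of `S` that are all preferred to the rest of `S` is what gets picked. -/
lemma topk_eq_of_forall_lt (σ : Fin m ≃ Fin m) {S A : Finset (Fin m)} {k : ℕ} (hA : A ⊆ S)
    (hk : #A = k) (h : ∀ x ∈ A, ∀ y ∈ S, y ∉ A → σ.symm x < σ.symm y) : topk σ S k = A := by
  subst hk
  ext x
  rw [mem_topk]
  constructor
  · rintro ⟨hx, hlt⟩
    by_contra hxA
    refine absurd hlt (not_lt.2 (card_le_card ?_))
    intro y hy
    exact mem_filter.2 ⟨hA hy, h y hy x hx hxA⟩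
  · intro hx
    refine ⟨hA hx, card_lt_card ((ssubset_iff_of_subset ?_).2 ⟨x, hx, by simp⟩)⟩
    intro y hy
    obtain ⟨hyS, hlt⟩ := mem_filter.1 hy
    by_contra hyA
    exact lt_asymm hlt (h x hx y hyS hyA)

lemma card_remaining_add {n d : ℕ} (P : ℕ → Fin (d * n) ≃ Fin (d * n)) {i : ℕ} (hi : i ≤ n) :
    #(remaining P (fun _ => d) i) + d * i = d * n := by
  induction i with
  | zero => simp [remaining]
  | succ i ih =>
    have hi' := ih (by omega)
    have hdi : d * (i + 1) ≤ d * n := Nat.mul_le_mul_left d hi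
    rw [mul_add, mul_one] at hdi ⊢
    rw [remaining, card_sdiff_of_subset (topk_subset _ _ _), card_topk _ (by omega)]
    omega

lemma le_card_remaining {n d : ℕ} (P : ℕ → Fin (d * n) ≃ Fin (d * n)) {i : ℕ} (hi : i < n) :
    d ≤ #(remaining P (fun _ => d) i) := by
  have h := card_remaining_add P hi.le
  have hdi : d * (i + 1) ≤ d * n := Nat.mul_le_mul_left d hi
  rw [mul_add, mul_one] at hdi
  omega

end Picking

section Bounds

variable {n d : ℕ} {s : ℕ → ℝ}

lemma util_le (hmono : ∀ i j : ℕ, 1 ≤ i → i ≤ j → j ≤ d * n → s j ≤ s i)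
    (P : ℕ → Fin (d * n) ≃ Fin (d * n)) {i : ℕ} (hi : i < n) :
    util s P (fun _ => d) i ≤ ∑ j ∈ range d, s (j + 1) := by
  rw [← sum_topk_betterCount (P i) (le_card_remaining P hi) fun j => s (j + 1)]
  refine sum_le_sum fun x _ => hmono _ _ (by omega) ?_ (((P i).symm x).isLt)
  exact Nat.succ_le_succ (betterCount_le_rank (P i) _ x)

lemma le_util (hmono : ∀ i j : ℕ, 1 ≤ i → i ≤ j → j ≤ d * n → s j ≤ s i)
    (P : ℕ → Fin (d * n) ≃ Fin (d * n)) {i : ℕ} (hi : i < n) :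
    ∑ j ∈ range d, s (d * i + j + 1) ≤ util s P (fun _ => d) i := by
  rw [← sum_topk_betterCount (P i) (le_card_remaining P hi) fun j => s (d * i + j + 1)]
  refine sum_le_sum fun x hx => ?_
  have hcompl : #(remaining P (fun _ => d) i)ᶜ = d * i := by
    have h := card_remaining_add P hi.le
    rw [card_compl, Fintype.card_fin]
    omega
  have hrank := rank_le_card_compl_add_betterCount (P i) (remaining P (fun _ => d) i) x
  have hdi : d * (i + 1) ≤ d * n := Nat.mul_le_mul_left d hi
  rw [mul_add, mul_one] at hdi
  have hlt := (mem_topk.1 hx).2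
  exact hmono _ _ (by omega) (by omega) (by omega)

lemma sum_range_sum_range_mul_add (f : ℕ → ℝ) (n d : ℕ) :
    ∑ i ∈ range n, ∑ j ∈ range d, f (d * i + j) = ∑ j ∈ range (d * n), f j := by
  induction n with
  | zero => simp
  | succ n ih => rw [sum_range_succ, ih, mul_add, mul_one, sum_range_add]

lemma sum_Icc_succ_eq_sum_range (f : ℕ → ℝ) (a k : ℕ) :
    ∑ j ∈ Icc (a + 1) (a + k), f j = ∑ j ∈ range k, f (a + j + 1) := by
  rw [← Finset.Ico_add_one_right_eq_Icc, sum_Ico_eq_sum_range]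
  have h : a + k + 1 - (a + 1) = k := by omega
  rw [h]
  exact sum_congr rfl fun j _ => by rw [add_right_comm]

lemma SWu_le (hmono : ∀ i j : ℕ, 1 ≤ i → i ≤ j → j ≤ d * n → s j ≤ s i)
    (P : ℕ → Fin (d * n) ≃ Fin (d * n)) : SWu n d s P ≤ n * ∑ j ∈ range d, s (j + 1) :=
  (sum_le_sum fun _ hi => util_le hmono P (mem_range.1 hi)).trans (by simp)

lemma le_SWu (hmono : ∀ i j : ℕ, 1 ≤ i → i ≤ j → j ≤ d * n → s j ≤ s i)
    (P : ℕ → Fin (d * n) ≃ Fin (d * n)) : ∑ j ∈ range (d * n), s (j + 1) ≤ SWu n d s P := by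
  rw [← sum_range_sum_range_mul_add fun j => s (j + 1)]
  exact sum_le_sum fun _ hi => le_util hmono P (mem_range.1 hi)

end Bounds

section Blocks

variable {n d : ℕ}

/-- The decomposition of `d * n` items into `n` consecutive blocks of `d` items. -/
def blockEquiv (n d : ℕ) : Fin n × Fin d ≃ Fin (d * n) :=
  finProdFinEquiv.trans (finCongr (mul_comm n d))

lemma blockEquiv_val (p : Fin n × Fin d) :
    (blockEquiv n d p : ℕ) = d * (p.1 : ℕ) + (p.2 : ℕ) := by
  simp [blockEquiv, finProdFinEquiv, add_comm]

/-- The ranking listing the blocks in the order `τ`, and each block in increasing order. -/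
def blockRanking (d : ℕ) (τ : Equiv.Perm (Fin n)) : Fin (d * n) ≃ Fin (d * n) :=
  (blockEquiv n d).symm.trans ((τ.prodCongr (Equiv.refl _)).trans (blockEquiv n d))

lemma blockRanking_symm_blockEquiv (τ : Equiv.Perm (Fin n)) (p : Fin n × Fin d) :
    (blockRanking d τ).symm (blockEquiv n d p) = blockEquiv n d (τ.symm p.1, p.2) := by
  simp [blockRanking, Prod.map]

/-- The items of block `b`. -/
def block (d : ℕ) (b : Fin n) : Finset (Fin (d * n)) :=
  (({b} : Finset (Fin n)) ×ˢ univ).map (blockEquiv n d).toEmbedding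

lemma blockEquiv_mem_block {b : Fin n} {p : Fin n × Fin d} :
    blockEquiv n d p ∈ block d b ↔ p.1 = b := by
  obtain ⟨c, r⟩ := p
  simp [block, eq_comm]

/-- The items in the blocks from the `i`-th on. -/
def blocksFrom (n d i : ℕ) : Finset (Fin (d * n)) :=
  univ.filter fun x => i ≤ (((blockEquiv n d).symm x).1 : ℕ)

lemma blockEquiv_mem_blocksFrom {i : ℕ} {p : Fin n × Fin d} :
    blockEquiv n d p ∈ blocksFrom n d i ↔ i ≤ (p.1 : ℕ) := by
  simp [blocksFrom]

lemma topk_blockRanking {τ : Equiv.Perm (Fin n)} {b : Fin n}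
    (hτ : ∀ c, b < c → τ.symm b < τ.symm c) :
    topk (blockRanking d τ) (blocksFrom n d b) d = block d b := by
  refine topk_eq_of_forall_lt _ ?_ (by simp [block]) ?_
  · intro x hx
    obtain ⟨p, rfl⟩ := (blockEquiv n d).surjective x
    rw [blockEquiv_mem_block] at hx
    rw [blockEquiv_mem_blocksFrom, hx]
  · intro x hx y hy hyb
    obtain ⟨p, rfl⟩ := (blockEquiv n d).surjective x
    obtain ⟨q, rfl⟩ := (blockEquiv n d).surjective y
    rw [blockEquiv_mem_block] at hx hyb
    rw [blockEquiv_mem_blocksFrom] at hy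
    have hlt : (τ.symm b : ℕ) + 1 ≤ τ.symm q.1 :=
      hτ q.1 (lt_of_le_of_ne hy (Ne.symm hyb))
    have hmul := Nat.mul_le_mul_left d hlt
    rw [mul_add, mul_one] at hmul
    have hp := p.2.isLt
    rw [blockRanking_symm_blockEquiv, blockRanking_symm_blockEquiv, Fin.lt_def, blockEquiv_val,
      blockEquiv_val, hx]
    dsimp only
    omega

/-- If at each position the agent prefers the block of that index to all later blocks, then
the items remaining are always the later blocks. -/
lemma remaining_blockRanking {Q : ℕ → Fin (d * n) ≃ Fin (d * n)}
    {τ : Fin n → Equiv.Perm (Fin n)} (hQ : ∀ i : Fin n, Q i = blockRanking d (τ i))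
    (hτ : ∀ b c, b < c → (τ b).symm b < (τ b).symm c) {i : ℕ} (hi : i ≤ n) :
    remaining Q (fun _ => d) i = blocksFrom n d i := by
  induction i with
  | zero => simp [remaining, blocksFrom]
  | succ i ih =>
    rw [remaining, ih (by omega), hQ ⟨i, hi⟩, topk_blockRanking (hτ ⟨i, hi⟩)]
    ext x
    obtain ⟨p, rfl⟩ := (blockEquiv n d).surjective x
    rw [mem_sdiff, blockEquiv_mem_block, blockEquiv_mem_blocksFrom, blockEquiv_mem_blocksFrom,
      Fin.ext_iff]
    dsimp only
    omega

lemma SWu_blockRanking (s : ℕ → ℝ) {Q : ℕ → Fin (d * n) ≃ Fin (d * n)}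
    {τ : Fin n → Equiv.Perm (Fin n)} (hQ : ∀ i : Fin n, Q i = blockRanking d (τ i))
    (hτ : ∀ b c, b < c → (τ b).symm b < (τ b).symm c) :
    SWu n d s Q = ∑ i : Fin n, ∑ j ∈ range d, s (d * ((τ i).symm i : ℕ) + j + 1) := by
  rw [SWu, sum_range]
  refine sum_congr rfl fun i _ => ?_
  rw [util, alloc, remaining_blockRanking hQ hτ i.isLt.le, hQ, topk_blockRanking (hτ i), block,
    sum_map, sum_product, sum_singleton, sum_range]
  refine sum_congr rfl fun r _ => ?_
  rw [Equiv.coe_toEmbedding, blockRanking_symm_blockEquiv, blockEquiv_val]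

end Blocks

/-- The orders in which the agents rank the blocks. The first agent starts with the first block
followed by the last one; agent `a > 0` starts with block `a - 1` and ranks block `a` after all
earlier blocks and before all later ones. -/
def blockOrder (N : ℕ) (a : Fin (N + 2)) : Equiv.Perm (Fin (N + 2)) :=
  Fin.cases (Equiv.swap 1 (Fin.last (N + 1))) (fun b => Equiv.swap 0 b.castSucc) a

lemma blockOrder_symm_self {N : ℕ} (b : Fin (N + 2)) : (blockOrder N b).symm b = b := by
  cases b using Fin.cases with
  | zero => exact Equiv.swap_apply_of_ne_of_ne (by simp) (by simp [Fin.ext_iff])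
  | succ b =>
    exact Equiv.swap_apply_of_ne_of_ne (Fin.succ_ne_zero b) (by simp [Fin.ext_iff])

lemma blockOrder_symm_lt {N : ℕ} {b c : Fin (N + 2)} (h : b < c) :
    (blockOrder N b).symm b < (blockOrder N b).symm c := by
  rw [blockOrder_symm_self]
  cases b using Fin.cases with
  | zero =>
    rw [Fin.pos_iff_ne_zero]
    intro h0
    rw [Equiv.symm_apply_eq] at h0
    have h1 := (Equiv.symm_apply_eq _).1 (blockOrder_symm_self (0 : Fin (N + 2)))
    exact h.ne' (h0.trans h1.symm)
  | succ b =>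
    have hc : (blockOrder N b.succ).symm c = c := by
      refine Equiv.swap_apply_of_ne_of_ne (Fin.ne_zero_of_lt h) ?_
      exact ((Fin.castSucc_lt_succ (i := b)).trans h).ne'
    rwa [hc]

lemma blockOrder_rotate_castSucc {N : ℕ} (b : Fin (N + 1)) :
    blockOrder N (finRotate (N + 2) b.castSucc) = Equiv.swap 0 b.castSucc := by
  rw [finRotate_apply, Fin.coeSucc_eq_succ]
  rfl

lemma blockOrder_rotate_last (N : ℕ) :
    blockOrder N (finRotate (N + 2) (Fin.last (N + 1))) = Equiv.swap 1 (Fin.last (N + 1)) := by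
  rw [finRotate_last]
  rfl

lemma blockOrder_rotate_symm_lt {N : ℕ} {b c : Fin (N + 2)} (h : b < c) :
    (blockOrder N (finRotate _ b)).symm b < (blockOrder N (finRotate _ b)).symm c := by
  cases b using Fin.lastCases with
  | last => exact absurd h (not_lt.2 (Fin.le_last c))
  | cast b =>
    rw [blockOrder_rotate_castSucc, Equiv.symm_swap, Equiv.swap_apply_right, Fin.pos_iff_ne_zero]
    intro h0
    rw [Equiv.swap_apply_eq_iff, Equiv.swap_apply_left] at h0
    exact (ne_of_gt h) h0

/-- The profile in which each agent ranks the blocks according to `blockOrder`. -/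
def blockProfile (N d a : ℕ) : Fin (d * (N + 2)) ≃ Fin (d * (N + 2)) :=
  blockRanking d (blockOrder N (Fin.ofNat (N + 2) a))

lemma permProfile_blockProfile {N d : ℕ} (π : Equiv.Perm (Fin (N + 2))) (i : Fin (N + 2)) :
    permProfile (N + 2) (blockProfile N d) π i = blockRanking d (blockOrder N (π i)) := by
  simp [permProfile, blockProfile]

lemma SWu_blockProfile_one (N d : ℕ) (s : ℕ → ℝ) :
    SWu (N + 2) d s (permProfile (N + 2) (blockProfile N d) 1) =
      ∑ j ∈ range (d * (N + 2)), s (j + 1) := by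
  rw [SWu_blockRanking s (τ := blockOrder N) (permProfile_blockProfile 1)
    fun _ _ => blockOrder_symm_lt, ← sum_range_sum_range_mul_add fun j => s (j + 1)]
  simp only [blockOrder_symm_self]
  rw [sum_range]

lemma SWu_blockProfile_rotate (N d : ℕ) (s : ℕ → ℝ) :
    SWu (N + 2) d s (permProfile (N + 2) (blockProfile N d) (finRotate (N + 2))) =
      (N + 1) * ∑ j ∈ range d, s (j + 1) + ∑ j ∈ range d, s (d + j + 1) := by
  rw [SWu_blockRanking s (permProfile_blockProfile (finRotate (N + 2)))
    fun _ _ => blockOrder_rotate_symm_lt, Fin.sum_univ_castSucc]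
  simp only [blockOrder_rotate_castSucc, blockOrder_rotate_last, Equiv.symm_swap,
    Equiv.swap_apply_right]
  simp

/-- Price of the assignment of agents to positions, utilitarian case.  For `n ≥ 2` agents,
`m = d·n` items and a strictly positive scoring vector `s`, there is a preference profile
`P` such that for the non-interleaving picking sequence `k = (d,…,d)`:
`((n-1)·Σ_{j=1}^{d} s_j + Σ_{j=d+1}^{2d} s_j) / Σ_{j=1}^{m} s_j
  ≤ max_π SW^u_{P_π}(k) / min_π SW^u_{P_π}(k) ≤ (n·Σ_{j=1}^{d} s_j) / Σ_{j=1}^{m} s_j`. -/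
theorem price_of_assignment_utilitarian
    (n d : ℕ) (hn : 2 ≤ n) (hd : 1 ≤ d) (s : ℕ → ℝ)
    (hmono : ∀ i j : ℕ, 1 ≤ i → i ≤ j → j ≤ d * n → s j ≤ s i)
    (hpos : ∀ j : ℕ, 1 ≤ j → j ≤ d * n → 0 < s j) :
    ∃ P : ℕ → Fin (d * n) ≃ Fin (d * n),
      (((n : ℝ) - 1) * (∑ j ∈ Finset.Icc 1 d, s j) +
            ∑ j ∈ Finset.Icc (d + 1) (2 * d), s j) /
          (∑ j ∈ Finset.Icc 1 (d * n), s j) ≤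
        (Finset.univ.sup' Finset.univ_nonempty
            (fun π : Equiv.Perm (Fin n) => SWu n d s (permProfile n P π))) /
          (Finset.univ.inf' Finset.univ_nonempty
            (fun π : Equiv.Perm (Fin n) => SWu n d s (permProfile n P π))) ∧
      (Finset.univ.sup' Finset.univ_nonempty
            (fun π : Equiv.Perm (Fin n) => SWu n d s (permProfile n P π))) /
          (Finset.univ.inf' Finset.univ_nonempty
            (fun π : Equiv.Perm (Fin n) => SWu n d s (permProfile n P π))) ≤
        (n : ℝ) * (∑ j ∈ Finset.Icc 1 d, s j) / (∑ j ∈ Finset.Icc 1 (d * n), s j) := by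
  obtain ⟨N, rfl⟩ := Nat.exists_eq_add_of_le' hn
  have hIcc (k : ℕ) : ∑ j ∈ Finset.Icc 1 k, s j = ∑ j ∈ range k, s (j + 1) := by
    simpa using sum_Icc_succ_eq_sum_range s 0 k
  have hsecond : ∑ j ∈ Finset.Icc (d + 1) (2 * d), s j = ∑ j ∈ range d, s (d + j + 1) := by
    rw [two_mul, sum_Icc_succ_eq_sum_range]
  have htotal : 0 < ∑ j ∈ range (d * (N + 2)), s (j + 1) := by
    refine sum_pos (fun j hj => hpos _ (by omega) (mem_range.1 hj)) ?_
    exact nonempty_range_iff.2 (by positivity)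
  refine ⟨blockProfile N d, ?_⟩
  have hmin : univ.inf' univ_nonempty (fun π : Equiv.Perm (Fin (N + 2)) =>
      SWu (N + 2) d s (permProfile (N + 2) (blockProfile N d) π)) =
      ∑ j ∈ range (d * (N + 2)), s (j + 1) := by
    apply le_antisymm
    · exact (inf'_le _ (mem_univ 1)).trans_eq (SWu_blockProfile_one N d s)
    · exact le_inf' _ _ fun π _ => le_SWu hmono _
  rw [hmin, hIcc, hIcc, hsecond]
  constructor
  · refine div_le_div_of_nonneg_right ?_ htotal.le
    refine le_trans (le_of_eq ?_) (le_sup' _ (mem_univ (finRotate (N + 2))))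
    rw [SWu_blockProfile_rotate]
    push_cast
    ring
  · refine div_le_div_of_nonneg_right ?_ htotal.le
    exact sup'_le _ _ fun π _ => SWu_le hmono _
end
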